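/- In the polynomial semiring over the nonnegative real numbers ℝ≥0, the identity (T + 1)(T^4 + T^2 + 1) = (T^3 + 1)(T^2 + T + 1) holds and all four polynomials T + 1, T^4 + T^2 + 1, T^3 + 1, T^2 + T + 1 are irreducible in ℝ≥0[T]; hence ℝ≥0[T] does not satisfy unique factorization, since the two factorizations consist of irreducibles with different multisets of degrees. -/

import Mathlib

open Polynomial NNReal

/-!
Over an entire semiring in which a sum vanishes only if all its terms do, no cancellation occurs in
a product of polynomials: the exponents of `f * g` are exactly the sums of exponents of `f` and `g`.
So if `f * g = q(Xⁿ)` and `q(0) ≠ 0`, then `0` is an exponent of both factors, all exponents of `f`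
and `g` are multiples of `n`, and the factorization comes from one of `q`. Hence `q(Xⁿ)` is
irreducible as soon as `q` is. Now `X³ + 1` and `X⁴ + X² + 1` arise in this way from `X + 1` and
`X² + X + 1`, and a proper factorization of the latter would be `(X + a)(X + b)` with `a * b = 1`
and `a + b = 1`.
-/

section Expand

variable {R : Type*} [CommSemiring R] {n : ℕ} {f g q : R[X]}

lemma isUnit_of_isUnit_expand (hn : n ≠ 0) (h : IsUnit (expand R n q)) : IsUnit q := by
  obtain ⟨g, hg⟩ := h.exists_left_inv
  refine .of_mul_eq_one_right (contract n g) ?_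
  rw [← contract_mul_expand hn, hg, ← C_1, contract_C]

lemma expand_contract_of_forall_dvd (hn : n ≠ 0) (h : ∀ k, f.coeff k ≠ 0 → n ∣ k) :
    expand R n (contract n f) = f := by
  ext k
  rw [coeff_expand hn.bot_lt, coeff_contract hn]
  split_ifs with hk
  · rw [Nat.div_mul_cancel hk]
  · exact (not_imp_comm.mp (h k) hk).symm

variable [NoZeroDivisors R] [Subsingleton (AddUnits R)]

lemma coeff_add_mul_ne_zero {i j : ℕ} (hf : f.coeff i ≠ 0) (hg : g.coeff j ≠ 0) :
    (f * g).coeff (i + j) ≠ 0 := by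
  rw [coeff_mul]
  intro h
  exact mul_ne_zero hf hg <|
    Finset.sum_eq_zero_iff.mp h (i, j) (Finset.HasAntidiagonal.mem_antidiagonal.mpr rfl)

lemma expand_contract_of_mul_eq_expand (hn : n ≠ 0) (h : f * g = expand R n q)
    (hg : g.coeff 0 ≠ 0) : expand R n (contract n f) = f := by
  refine expand_contract_of_forall_dvd hn fun k hk ↦ ?_
  have hfg : (f * g).coeff (k + 0) ≠ 0 := coeff_add_mul_ne_zero hk hg
  rw [h, add_zero, coeff_expand hn.bot_lt] at hfg
  exact of_not_not fun hnk ↦ hfg (if_neg hnk)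

theorem irreducible_expand (hn : n ≠ 0) (hq : Irreducible q) (hq₀ : q.coeff 0 ≠ 0) :
    Irreducible (expand R n q) where
  not_isUnit h := hq.not_isUnit (isUnit_of_isUnit_expand hn h)
  isUnit_or_isUnit f g h := by
    have h₀ : f.coeff 0 * g.coeff 0 ≠ 0 := by
      rwa [← mul_coeff_zero, ← h, coeff_expand hn.bot_lt, if_pos (dvd_zero n), Nat.zero_div]
    have hf : expand R n (contract n f) = f :=
      expand_contract_of_mul_eq_expand hn h.symm (right_ne_zero_of_mul h₀)
    have hg : expand R n (contract n g) = g :=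
      expand_contract_of_mul_eq_expand hn (mul_comm g f ▸ h.symm) (left_ne_zero_of_mul h₀)
    have hqfg : q = contract n f * contract n g := by
      rw [← contract_mul_expand hn, hg, ← h, contract_expand n hn]
    rw [← hf, ← hg]
    exact (hq.isUnit_or_isUnit hqfg).imp (·.map _) (·.map _)

end Expand

section Factors

variable {R : Type*} [CommSemiring R] [NoZeroDivisors R]

lemma irreducible_X_add_one [Nontrivial R] : Irreducible (X + 1 : R[X]) := by
  have hdeg : (X + 1 : R[X]).natDegree = 1 := by compute_degree!
  have hmonic : (X + 1 : R[X]).Monic := by monicity!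
  rw [hmonic.irreducible_iff_natDegree', hdeg]
  refine ⟨fun h ↦ ?_, by simp⟩
  simp [h] at hdeg

lemma irreducible_X_sq_add_X_add_one_iff [Nontrivial R] :
    Irreducible (X ^ 2 + X + 1 : R[X]) ↔ ∀ a b : R, a * b = 1 → a + b ≠ 1 := by
  have hdeg : (X ^ 2 + X + 1 : R[X]).natDegree = 2 := by compute_degree!
  have hmonic : (X ^ 2 + X + 1 : R[X]).Monic := by monicity!
  have hcoeff₀ : (X ^ 2 + X + 1 : R[X]).coeff 0 = 1 := by simp
  have hcoeff₁ : (X ^ 2 + X + 1 : R[X]).coeff 1 = 1 := by simp [coeff_X_pow, coeff_one]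
  rw [← not_iff_not, hmonic.not_irreducible_iff_exists_add_mul_eq_coeff hdeg, hcoeff₀, hcoeff₁]
  simp [eq_comm (a := (1 : R))]

variable [Subsingleton (AddUnits R)]

lemma irreducible_X_pow_add_one [Nontrivial R] {n : ℕ} (hn : n ≠ 0) :
    Irreducible (X ^ n + 1 : R[X]) := by
  simpa using irreducible_expand hn (irreducible_X_add_one (R := R)) (by simp)

lemma irreducible_X_pow_mul_two_add_X_pow_add_one {n : ℕ} (hn : n ≠ 0)
    (h : Irreducible (X ^ 2 + X + 1 : R[X])) : Irreducible (X ^ (n * 2) + X ^ n + 1 : R[X]) := by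
  have : Nontrivial R := Nontrivial.of_polynomial_ne h.ne_zero
  simpa [← pow_mul] using irreducible_expand hn h (by simp)

end Factors

lemma add_ne_one_of_mul_eq_one {R : Type*} [CommSemiring R] [PartialOrder R]
    [IsStrictOrderedRing R] [CanonicallyOrderedAdd R] {a b : R} (hab : a * b = 1) : a + b ≠ 1 := by
  intro hadd
  have ha : a ≤ 1 := hadd ▸ le_self_add
  have hb : b ≤ 1 := hadd ▸ le_add_self
  have ha₁ : a = 1 := ha.antisymm (hab ▸ mul_le_of_le_one_right' hb)
  have hb₁ : b = 1 := by rwa [ha₁, one_mul] at hab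
  rw [ha₁, hb₁] at hadd
  exact (lt_add_one (1 : R)).ne' hadd

theorem nnreal_polynomial_not_UFD_general {R : Type*} [CommSemiring R] [NoZeroDivisors R]
    [Subsingleton (AddUnits R)] (hR : ∀ a b : R, a * b = 1 → a + b ≠ 1) :
    ((X : R[X]) + 1) * (X ^ 4 + X ^ 2 + 1) = (X ^ 3 + 1) * (X ^ 2 + X + 1) ∧
    Irreducible ((X : R[X]) + 1) ∧
    Irreducible ((X : R[X]) ^ 4 + X ^ 2 + 1) ∧
    Irreducible ((X : R[X]) ^ 3 + 1) ∧
    Irreducible ((X : R[X]) ^ 2 + X + 1) ∧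
    ∃ l₁ l₂ : List R[X],
      (∀ p ∈ l₁, Irreducible p) ∧ (∀ p ∈ l₂, Irreducible p) ∧
      l₁.prod = (X : R[X]) ^ 5 + X ^ 4 + X ^ 3 + X ^ 2 + X + 1 ∧
      l₂.prod = (X : R[X]) ^ 5 + X ^ 4 + X ^ 3 + X ^ 2 + X + 1 ∧
      (↑(l₁.map Polynomial.natDegree) : Multiset ℕ) = {1, 4} ∧
      (↑(l₂.map Polynomial.natDegree) : Multiset ℕ) = {3, 2} ∧
      ({1, 4} : Multiset ℕ) ≠ {3, 2} := by
  have : Nontrivial R := nontrivial_of_ne (1 + 1) 1 (hR 1 1 (mul_one 1))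
  have irr₁ : Irreducible (X + 1 : R[X]) := irreducible_X_add_one
  have irr₂ : Irreducible (X ^ 2 + X + 1 : R[X]) := irreducible_X_sq_add_X_add_one_iff.mpr hR
  have irr₃ : Irreducible (X ^ 3 + 1 : R[X]) := irreducible_X_pow_add_one three_ne_zero
  have irr₄ : Irreducible (X ^ 4 + X ^ 2 + 1 : R[X]) :=
    irreducible_X_pow_mul_two_add_X_pow_add_one (n := 2) two_ne_zero irr₂
  have deg₁ : (X + 1 : R[X]).natDegree = 1 := by compute_degree!
  have deg₂ : (X ^ 2 + X + 1 : R[X]).natDegree = 2 := by compute_degree!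
  have deg₃ : (X ^ 3 + 1 : R[X]).natDegree = 3 := by compute_degree!
  have deg₄ : (X ^ 4 + X ^ 2 + 1 : R[X]).natDegree = 4 := by compute_degree!
  refine ⟨by ring, irr₁, irr₄, irr₃, irr₂, [X + 1, X ^ 4 + X ^ 2 + 1], [X ^ 3 + 1, X ^ 2 + X + 1],
    by simp [irr₁, irr₄], by simp [irr₃, irr₂], ?_, ?_, ?_, ?_, by decide⟩
  · rw [List.prod_pair]; ring
  · rw [List.prod_pair]; ring
  · simp only [List.map_cons, List.map_nil, deg₁, deg₄]; rfl
  · simp only [List.map_cons, List.map_nil, deg₃, deg₂]; rfl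

/-- In `ℝ≥0[T]` the identity `(T + 1)(T⁴ + T² + 1) = (T³ + 1)(T² + T + 1)` holds
with all four factors irreducible; hence `ℝ≥0[T]` does not satisfy unique
factorization, the multisets of degrees `{1, 4}` and `{3, 2}` being different. -/
theorem nnreal_polynomial_not_UFD :
    ((X : ℝ≥0[X]) + 1) * (X ^ 4 + X ^ 2 + 1) = (X ^ 3 + 1) * (X ^ 2 + X + 1) ∧
    Irreducible ((X : ℝ≥0[X]) + 1) ∧
    Irreducible ((X : ℝ≥0[X]) ^ 4 + X ^ 2 + 1) ∧
    Irreducible ((X : ℝ≥0[X]) ^ 3 + 1) ∧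
    Irreducible ((X : ℝ≥0[X]) ^ 2 + X + 1) ∧
    ∃ l₁ l₂ : List ℝ≥0[X],
      (∀ p ∈ l₁, Irreducible p) ∧ (∀ p ∈ l₂, Irreducible p) ∧
      l₁.prod = (X : ℝ≥0[X]) ^ 5 + X ^ 4 + X ^ 3 + X ^ 2 + X + 1 ∧
      l₂.prod = (X : ℝ≥0[X]) ^ 5 + X ^ 4 + X ^ 3 + X ^ 2 + X + 1 ∧
      (↑(l₁.map Polynomial.natDegree) : Multiset ℕ) = {1, 4} ∧
      (↑(l₂.map Polynomial.natDegree) : Multiset ℕ) = {3, 2} ∧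
      ({1, 4} : Multiset ℕ) ≠ {3, 2} :=
  nnreal_polynomial_not_UFD_general fun _ _ ↦ add_ne_one_of_mul_eq_one
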